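/- (Rothblum index theorem) Let B be a Metzler matrix. Then the spectral abscissa ζ(B) is an eigenvalue of B whose index equals the length of the longest chain of classes of B, where the length of a chain is the number of basic classes it contains. -/

import Mathlib

open Matrix
open scoped Classical

/-- The spectral abscissa of a real square matrix. -/
noncomputable def specAbs {n : Type*} [Fintype n] [DecidableEq n]
    (A : Matrix n n ℝ) : ℝ :=
  sSup (Complex.re '' spectrum ℂ (A.map (algebraMap ℝ ℂ)))

variable {N : ℕ}

/-- The directed edge relation of the nonzero off-diagonal entries of `B`. -/
def edgeRel (B : Matrix (Fin N) (Fin N) ℝ) (i j : Fin N) : Prop := i ≠ j ∧ B i j ≠ 0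

/-- Vertex `i` has access to vertex `j`. -/
def access (B : Matrix (Fin N) (Fin N) ℝ) : Fin N → Fin N → Prop :=
  Relation.ReflTransGen (edgeRel B)

/-- A class of `B`: an equivalence class of the communication relation, i.e. the vertex
set of a strongly connected component of the directed graph of `B`. -/
def IsClass (B : Matrix (Fin N) (Fin N) ℝ) (γ : Set (Fin N)) : Prop :=
  ∃ m : Fin N, γ = {n' : Fin N | access B m n' ∧ access B n' m}

/-- Class `γ` has access to class `δ`. -/
def classAccess (B : Matrix (Fin N) (Fin N) ℝ) (γ δ : Set (Fin N)) : Prop :=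
  ∃ m ∈ γ, ∃ n' ∈ δ, access B m n'

/-- A chain of classes of `B`: a list of classes, strictly increasing in the access
order. -/
def IsClassChain (B : Matrix (Fin N) (Fin N) ℝ) (l : List (Set (Fin N))) : Prop :=
  (∀ γ ∈ l, IsClass B γ) ∧ l.Chain' (fun γ δ => classAccess B γ δ ∧ γ ≠ δ)

/-- The principal submatrix of `B` on the index set `γ`. -/
def subMat (B : Matrix (Fin N) (Fin N) ℝ) (γ : Set (Fin N)) : Matrix γ γ ℝ :=
  fun a b => B a.1 b.1

/-- A class `γ` of `B` is basic if `ζ(B_{γ,γ}) = ζ(B)`. -/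
def IsBasic (B : Matrix (Fin N) (Fin N) ℝ) (γ : Set (Fin N)) : Prop :=
  specAbs (subMat B γ) = specAbs B

/-- The length of a chain of classes: the number of basic classes it contains. -/
noncomputable def chainLen (B : Matrix (Fin N) (Fin N) ℝ) (l : List (Set (Fin N))) : ℕ :=
  l.countP (fun γ => decide (IsBasic B γ))

/-!
Let `ζ` be the spectral abscissa of `B` and `u t = (ζ + t - B)⁻¹ 1` for `t > 0`. This vector is
nonnegative and dominates the whole resolvent, so as `t` decreases to `0` it grows like `t⁻¹ ^ d`,
where `d` is the index of `ζ`.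

On a class `γ` the vector `u t` solves `(ζ + t - B_γγ) v = f`, where `f` is `1` plus a nonnegative
combination of the coordinates of `u t` at the vertices reached by the edges leaving `γ`. All
coordinates of `v` are comparable, by Harnack's inequality along the edges inside `γ`. If `γ` is
basic, pairing with the left Perron vector of `B_γγ` shows that they are of order `t⁻¹ ∑ f`;
otherwise `ζ + t - B_γγ` stays invertible at `t = 0` and they are of order `∑ f`. Hence every basic
class on a chain contributes exactly one factor `t⁻¹`, and `u t` grows like `t⁻¹` to the length of
the longest chain.
-/

open Filter Topology Asymptotics

section Asymptotics

variable {α ι : Type*} [Fintype ι] {l : Filter α} {f : α → ι → ℝ}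

theorem isBigO_sum_of_nonneg (hf : ∀ᶠ a in l, 0 ≤ f a) (j : ι) :
    (fun a => f a j) =O[l] fun a => ∑ i, f a i := by
  refine IsBigO.of_norm_eventuallyLE ?_
  filter_upwards [hf] with a ha
  rw [Real.norm_of_nonneg (ha j)]
  exact Finset.single_le_sum (fun i _ => ha i) (Finset.mem_univ j)

theorem isTheta_dotProduct_sum {w : ι → ℝ} (hw : ∀ i, 0 < w i) (hf : ∀ᶠ a in l, 0 ≤ f a) :
    (fun a => w ⬝ᵥ f a) =Θ[l] fun a => ∑ i, f a i := by
  have hwf : ∀ᶠ a in l, 0 ≤ w * f a := hf.mono fun a ha i => mul_nonneg (hw i).le (ha i)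
  exact ⟨IsBigO.fun_sum fun j _ => (isBigO_sum_of_nonneg hf j).const_mul_left (w j),
    IsBigO.fun_sum fun j _ => (isBigO_const_mul_left_iff (hw j).ne').1 (isBigO_sum_of_nonneg hwf j)⟩

theorem inv_pow_isBigO_inv_pow_iff {k m : ℕ} :
    (fun t : ℝ => t⁻¹ ^ k) =O[𝓝[>] 0] (fun t => t⁻¹ ^ m) ↔ k ≤ m := by
  constructor
  · contrapose!
    intro hmk h
    refine (((isLittleO_pow_pow_atTop_of_lt hmk).comp_tendsto
      tendsto_inv_nhdsGT_zero).not_isBigO ?_) h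
    refine Eventually.frequently ?_
    filter_upwards [self_mem_nhdsWithin] with t ht
    exact pow_ne_zero m (inv_ne_zero (ne_of_gt ht))
  · intro hkm
    refine IsBigO.of_norm_eventuallyLE ?_
    filter_upwards [Ioc_mem_nhdsGT (zero_lt_one' ℝ)] with t ht
    have ht' : 1 ≤ t⁻¹ := (one_le_inv₀ ht.1).2 ht.2
    rw [Real.norm_of_nonneg (by positivity)]
    exact pow_le_pow_right₀ ht' hkm

end Asymptotics

section Resolvent

theorem exists_mul_eq_of_ker_mulVecLin_le {K ι : Type*} [Field K] [Fintype ι] {A C : Matrix ι ι K}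
    (h : LinearMap.ker A.mulVecLin ≤ LinearMap.ker C.mulVecLin) :
    ∃ G : Matrix ι ι K, G * A = C := by
  obtain ⟨g, hg⟩ := LinearMap.exists_extend
    ((LinearMap.ker A.mulVecLin).liftQ C.mulVecLin h ∘ₗ
      A.mulVecLin.quotKerEquivRange.symm.toLinearMap)
  have hgA (x : ι → K) : g (A *ᵥ x) = C *ᵥ x := by
    have hx := LinearMap.congr_fun hg ⟨A.mulVecLin x, LinearMap.mem_range_self _ x⟩
    rw [LinearMap.comp_apply, LinearMap.comp_apply, LinearEquiv.coe_coe,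
      LinearMap.quotKerEquivRange_symm_apply_image] at hx
    exact hx
  refine ⟨LinearMap.toMatrix' g, Matrix.ext_of_mulVec_single fun i => ?_⟩
  rw [← Matrix.mulVec_mulVec, LinearMap.toMatrix'_mulVec, hgA]

theorem ker_mulVecLin_pow_le_pow_succ {R ι : Type*} [CommSemiring R] [Fintype ι] [DecidableEq ι]
    (A : Matrix ι ι R) (d : ℕ) :
    LinearMap.ker (A ^ d).mulVecLin ≤ LinearMap.ker (A ^ (d + 1)).mulVecLin := by
  rw [pow_succ', Matrix.mulVecLin_mul]
  exact LinearMap.ker_le_ker_comp _ _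

theorem mem_spectrum_iff_exists_mulVec_eq_smul {K ι : Type*} [Field K] [Fintype ι]
    [DecidableEq ι] {M : Matrix ι ι K} {s : K} :
    s ∈ spectrum K M ↔ ∃ x ≠ 0, M *ᵥ x = s • x := by
  rw [← Matrix.spectrum_toLin', ← Module.End.hasEigenvalue_iff_mem_spectrum]
  constructor
  · intro h
    obtain ⟨x, hx⟩ := h.exists_hasEigenvector
    exact ⟨x, hx.2, by simpa using hx.apply_eq_smul⟩
  · rintro ⟨x, hx, hMx⟩
    exact Module.End.hasEigenvalue_of_hasEigenvector
      (Module.End.hasEigenvector_iff.2 ⟨Module.End.mem_eigenspace_iff.2 (by simpa using hMx), hx⟩)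

variable {R ι : Type*} [CommRing R] [Fintype ι] [DecidableEq ι] {M : Matrix ι ι R} {s : R}

theorem algebraMap_sub_mulVec (M : Matrix ι ι R) (s : R) (x : ι → R) :
    (algebraMap R (Matrix ι ι R) s - M) *ᵥ x = s • x - M *ᵥ x := by
  rw [Matrix.sub_mulVec, Algebra.algebraMap_eq_smul_one, Matrix.smul_mulVec, Matrix.one_mulVec]

theorem smul_resolvent_mulVec_sub (hs : s ∈ resolventSet R M) (x : ι → R) :
    s • (resolvent M s *ᵥ x) - M *ᵥ (resolvent M s *ᵥ x) = x := by
  rw [← algebraMap_sub_mulVec, Matrix.mulVec_mulVec, resolvent,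
    Ring.mul_inverse_cancel _ (spectrum.mem_resolventSet_iff.1 hs), Matrix.one_mulVec]

theorem eq_resolvent_mulVec (hs : s ∈ resolventSet R M) {x f : ι → R}
    (h : s • x - M *ᵥ x = f) : x = resolvent M s *ᵥ f := by
  rw [← h, ← algebraMap_sub_mulVec, Matrix.mulVec_mulVec, resolvent,
    Ring.inverse_mul_cancel _ (spectrum.mem_resolventSet_iff.1 hs), Matrix.one_mulVec]

end Resolvent

/-! ### Growth of the resolvent and kernels of powers -/

section PoleOrder

variable {𝕜 ι : Type*} [NormedField 𝕜]

theorem isBigO_inv_pow_iff_isBigO_pow_smul {E : Type*} [SeminormedAddCommGroup E]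
    [NormedSpace 𝕜 E] {l : Filter 𝕜} (hl : l ≤ 𝓝[≠] 0) {u : 𝕜 → E} {d : ℕ} :
    (u =O[l] fun t => t⁻¹ ^ d) ↔ (fun t => t ^ d • u t) =O[l] fun _ => (1 : 𝕜) := by
  have hne : ∀ᶠ t in l, t ≠ 0 := hl self_mem_nhdsWithin
  constructor <;> intro h
  · refine ((isBigO_refl (fun t : 𝕜 => t ^ d) l).smul h).congr' EventuallyEq.rfl ?_
    filter_upwards [hne] with t ht
    simp [ht]
  · refine ((isBigO_refl (fun t : 𝕜 => t⁻¹ ^ d) l).smul h).congr' ?_ (by simp)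
    filter_upwards [hne] with t ht
    simp [ht, smul_smul]

variable [Fintype ι]

theorem isBigO_mulVec {α : Type*} {l : Filter α} (A : Matrix ι ι 𝕜) (x : α → ι → 𝕜) :
    (fun a => A *ᵥ x a) =O[l] x :=
  isBigO_pi.2 fun i => IsBigO.fun_sum fun j _ =>
    (isBigO_pi.1 (isBigO_refl x l) j).const_mul_left (A i j)

variable [DecidableEq ι]

theorem continuousAt_resolvent {M : Matrix ι ι 𝕜} {s : 𝕜} (hs : s ∈ resolventSet 𝕜 M) :
    ContinuousAt (resolvent M) s := by
  have hdet : (algebraMap 𝕜 (Matrix ι ι 𝕜) s - M).det ≠ 0 :=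
    ((Matrix.isUnit_iff_isUnit_det _).1 (spectrum.mem_resolventSet_iff.1 hs)).ne_zero
  have hinv : ContinuousAt Inv.inv (algebraMap 𝕜 (Matrix ι ι 𝕜) s - M) :=
    continuousAt_matrix_inv _ (by simpa using continuousAt_inv₀ hdet)
  have hcomp : ContinuousAt (fun r => (algebraMap 𝕜 (Matrix ι ι 𝕜) r - M)⁻¹) s :=
    ContinuousAt.comp hinv (by fun_prop)
  simp only [Matrix.nonsing_inv_eq_ringInverse] at hcomp
  exact hcomp

variable {A : Matrix ι ι 𝕜} {b : ι → 𝕜} {u : 𝕜 → ι → 𝕜} {l : Filter 𝕜} {d : ℕ}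

theorem isBigO_pow_smul_sub_pow_mulVec (hl : l ≤ 𝓝[≠] 0)
    (hu : ∀ᶠ t in l, t • u t - A *ᵥ u t = b) (m : ℕ) :
    (fun t => t ^ m • u t - A ^ m *ᵥ u t) =O[l] fun _ => (1 : 𝕜) := by
  induction m with
  | zero =>
    simp only [pow_zero, one_smul, Matrix.one_mulVec, sub_self]
    exact isBigO_zero _ _
  | succ m ih =>
    have hid : (fun t : 𝕜 => t) =O[l] fun _ => (1 : 𝕜) :=
      (tendsto_id.mono_left (hl.trans nhdsWithin_le_nhds)).isBigO_one 𝕜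
    have hrec : ∀ᶠ t in l, t • (t ^ m • u t - A ^ m *ᵥ u t) + A ^ m *ᵥ b =
        t ^ (m + 1) • u t - A ^ (m + 1) *ᵥ u t := by
      filter_upwards [hu] with t ht
      rw [← ht, Matrix.mulVec_sub, Matrix.mulVec_smul, Matrix.mulVec_mulVec, ← pow_succ, smul_sub,
        smul_smul, ← pow_succ']
      abel
    refine IsBigO.congr' ?_ hrec EventuallyEq.rfl
    have hsmul := hid.smul ih
    rw [one_smul] at hsmul
    exact hsmul.add (isBigO_const_const (A ^ m *ᵥ b) (one_ne_zero' 𝕜) l)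

theorem isBigO_inv_pow_of_ker_pow_le
    (hker : LinearMap.ker (A ^ (d + 1)).mulVecLin ≤ LinearMap.ker (A ^ d).mulVecLin)
    (hl : l ≤ 𝓝[≠] 0) (hu : ∀ᶠ t in l, t • u t - A *ᵥ u t = b) :
    u =O[l] fun t => t⁻¹ ^ d := by
  obtain ⟨G, hG⟩ := exists_mul_eq_of_ker_mulVecLin_le hker
  have hid : (fun t : 𝕜 => t) =o[l] fun _ => (1 : 𝕜) :=
    (isLittleO_one_iff 𝕜).2 (hl.trans nhdsWithin_le_nhds)
  have hsmall : (fun t => t • G *ᵥ (A ^ d *ᵥ u t)) =o[l] fun t => A ^ d *ᵥ u t := by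
    simpa using hid.smul_isBigO (isBigO_mulVec G fun t => A ^ d *ᵥ u t)
  have hpow : (fun t => A ^ d *ᵥ u t) =O[l] fun _ => (1 : 𝕜) := by
    refine hsmall.right_isBigO_sub.trans ?_
    refine (isBigO_const_const (-G *ᵥ (A ^ d *ᵥ b)) (one_ne_zero' 𝕜) l).congr' ?_ EventuallyEq.rfl
    filter_upwards [hu] with t ht
    rw [← ht, Matrix.neg_mulVec, Matrix.mulVec_sub, Matrix.mulVec_smul, Matrix.mulVec_sub,
      Matrix.mulVec_smul, Matrix.mulVec_mulVec (u t) (A ^ d) A, ← pow_succ,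
      Matrix.mulVec_mulVec (u t) G (A ^ (d + 1)), hG, neg_sub]
  rw [isBigO_inv_pow_iff_isBigO_pow_smul hl]
  simpa using (isBigO_pow_smul_sub_pow_mulVec hl hu d).add hpow

theorem pow_mulVec_eq_zero_of_isBigO_inv_pow [l.NeBot] (hl : l ≤ 𝓝[≠] 0)
    (hu : ∀ᶠ t in l, t • u t - A *ᵥ u t = b) (hres : ∀ᶠ t in l, t ∈ resolventSet 𝕜 A)
    (hgrowth : u =O[l] fun t => t⁻¹ ^ d) (hb : A ^ (d + 1) *ᵥ b = 0) :
    A ^ d *ᵥ b = 0 := by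
  have hvanish : ∀ᶠ t in l, A ^ (d + 1) *ᵥ u t = 0 := by
    filter_upwards [hu, hres] with t ht htr
    rw [eq_resolvent_mulVec htr (x := A ^ (d + 1) *ᵥ u t) (f := 0), Matrix.mulVec_zero]
    rw [← hb, ← ht, Matrix.mulVec_sub, Matrix.mulVec_smul, Matrix.mulVec_mulVec,
      Matrix.mulVec_mulVec, pow_mul_comm' A (d + 1)]
  have hpow : (fun t => A ^ d *ᵥ u t) =O[l] fun _ => (1 : 𝕜) := by
    simpa using ((isBigO_inv_pow_iff_isBigO_pow_smul hl).1 hgrowth).sub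
      (isBigO_pow_smul_sub_pow_mulVec hl hu d)
  have hlim : Tendsto (fun t => t • A ^ d *ᵥ u t) l (𝓝 0) := by
    rw [← isLittleO_one_iff 𝕜]
    simpa using ((isLittleO_one_iff 𝕜).2 (hl.trans nhdsWithin_le_nhds)).smul_isBigO hpow
  refine tendsto_nhds_unique_of_eventuallyEq tendsto_const_nhds hlim ?_
  filter_upwards [hu, hvanish] with t ht htv
  rw [← ht, Matrix.mulVec_sub, Matrix.mulVec_smul, Matrix.mulVec_mulVec, ← pow_succ, htv, sub_zero]

end PoleOrder

/-! ### Metzler matrices and the spectral abscissa -/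

section Metzler

variable {ι : Type*}

/-- A Metzler matrix: the off-diagonal entries are nonnegative. -/
def IsMetzler (M : Matrix ι ι ℝ) : Prop :=
  ∀ i j, i ≠ j → 0 ≤ M i j

theorem IsMetzler.transpose {M : Matrix ι ι ℝ} (hM : IsMetzler M) : IsMetzler Mᵀ :=
  fun i j hij => hM j i hij.symm

variable [Fintype ι]

theorem mulVec_apply_eq_add_sum_erase {R : Type*} [NonUnitalNonAssocSemiring R] [DecidableEq ι]
    (M : Matrix ι ι R) (x : ι → R) (i : ι) :
    (M *ᵥ x) i = M i i * x i + ∑ j ∈ Finset.univ.erase i, M i j * x j :=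
  (Finset.add_sum_erase _ _ (Finset.mem_univ i)).symm

variable {M : Matrix ι ι ℝ} {s : ℝ} {u : ι → ℝ}

theorem IsMetzler.add_le_mulVec (hM : IsMetzler M) (hu : 0 ≤ u) {i j : ι} (hij : i ≠ j) :
    M i i * u i + M i j * u j ≤ (M *ᵥ u) i := by
  rw [mulVec_apply_eq_add_sum_erase]
  gcongr
  exact Finset.single_le_sum (f := fun k => M i k * u k)
    (fun k hk => mul_nonneg (hM i k (Finset.ne_of_mem_erase hk).symm) (hu k))
    (Finset.mem_erase.2 ⟨hij.symm, Finset.mem_univ j⟩)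

theorem IsMetzler.diag_mul_le_mulVec (hM : IsMetzler M) (hu : 0 ≤ u) (i : ι) :
    M i i * u i ≤ (M *ᵥ u) i := by
  rw [mulVec_apply_eq_add_sum_erase]
  exact le_add_of_nonneg_right (Finset.sum_nonneg fun k hk =>
    mul_nonneg (hM i k (Finset.ne_of_mem_erase hk).symm) (hu k))

theorem IsMetzler.re_smul_norm_le_mulVec_norm {𝕜 : Type*} [RCLike 𝕜] (hM : IsMetzler M) {μ : 𝕜}
    {z : ι → 𝕜} (hz : M.map (algebraMap ℝ 𝕜) *ᵥ z = μ • z) :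
    RCLike.re μ • (fun i => ‖z i‖) ≤ M *ᵥ fun i => ‖z i‖ := by
  intro i
  have hrow : (μ - (M i i : 𝕜)) * z i = ∑ j ∈ Finset.univ.erase i, (M i j : 𝕜) * z j := by
    rw [sub_mul, sub_eq_iff_eq_add', ← smul_eq_mul μ, ← Pi.smul_apply, ← hz]
    exact mulVec_apply_eq_add_sum_erase _ z i
  have hoff : (RCLike.re μ - M i i) * ‖z i‖ ≤ ∑ j ∈ Finset.univ.erase i, M i j * ‖z j‖ :=
    calc (RCLike.re μ - M i i) * ‖z i‖
        ≤ ‖μ - (M i i : 𝕜)‖ * ‖z i‖ := by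
          gcongr
          simpa using RCLike.re_le_norm (μ - (M i i : 𝕜))
      _ = ‖∑ j ∈ Finset.univ.erase i, (M i j : 𝕜) * z j‖ := by rw [← norm_mul, hrow]
      _ ≤ ∑ j ∈ Finset.univ.erase i, ‖(M i j : 𝕜) * z j‖ := norm_sum_le _ _
      _ = ∑ j ∈ Finset.univ.erase i, M i j * ‖z j‖ := Finset.sum_congr rfl fun j hj => by
          rw [norm_mul, RCLike.norm_of_nonneg (hM i j (Finset.ne_of_mem_erase hj).symm)]
  rw [mulVec_apply_eq_add_sum_erase, Pi.smul_apply, smul_eq_mul]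
  linarith

/-- `M` has a strictly positive vector `u` with `M u < s u` entrywise. For a Metzler matrix these
`s` form the open half-line to the right of the spectral abscissa, and on it the resolvent is
nonnegative. -/
def HasStrictSupersolution (M : Matrix ι ι ℝ) (s : ℝ) : Prop :=
  ∃ u : ι → ℝ, (∀ i, 0 < u i) ∧ ∀ i, (M *ᵥ u) i < s * u i

theorem exists_hasStrictSupersolution (M : Matrix ι ι ℝ) :
    ∃ s, HasStrictSupersolution M s := by
  refine ⟨∑ i, |(M *ᵥ 1) i| + 1, 1, fun _ => one_pos, fun i => ?_⟩
  rw [Pi.one_apply, mul_one]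
  calc (M *ᵥ 1) i ≤ |(M *ᵥ 1) i| := le_abs_self _
    _ ≤ ∑ j, |(M *ᵥ 1) j| :=
      Finset.single_le_sum (f := fun j => |(M *ᵥ 1) j|) (fun j _ => abs_nonneg _)
        (Finset.mem_univ i)
    _ < ∑ j, |(M *ᵥ 1) j| + 1 := lt_add_one _

theorem IsMetzler.hasStrictSupersolution_of_nonneg (hM : IsMetzler M) (hu : 0 ≤ u)
    (hMu : ∀ i, (M *ᵥ u) i < s * u i) : HasStrictSupersolution M s := by
  refine ⟨u, fun i => (hu i).lt_of_ne' fun hi => ?_, hMu⟩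
  have hlt := (hM.diag_mul_le_mulVec hu i).trans_lt (hMu i)
  simp [hi] at hlt

namespace HasStrictSupersolution

theorem mono {r : ℝ} (hs : HasStrictSupersolution M s) (hsr : s ≤ r) :
    HasStrictSupersolution M r := by
  obtain ⟨u, hu, hMu⟩ := hs
  exact ⟨u, hu, fun i => (hMu i).trans_le (mul_le_mul_of_nonneg_right hsr (hu i).le)⟩

theorem exists_lt (hs : HasStrictSupersolution M s) : ∃ r < s, HasStrictSupersolution M r := by
  obtain ⟨u, hu, hMu⟩ := hs
  have hnear : ∀ᶠ r in 𝓝[<] s, ∀ i, (M *ᵥ u) i < r * u i :=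
    eventually_all.2 fun i => nhdsWithin_le_nhds <|
      (continuous_mul_const (u i)).continuousAt.eventually (lt_mem_nhds (hMu i))
  obtain ⟨r, hr, hrs⟩ := (hnear.and self_mem_nhdsWithin).exists
  exact ⟨r, hrs, u, hu, hr⟩

theorem diag_lt (hs : HasStrictSupersolution M s) (hM : IsMetzler M) (i : ι) : M i i < s := by
  obtain ⟨u, hu, hMu⟩ := hs
  exact lt_of_mul_lt_mul_right
    ((hM.diag_mul_le_mulVec (fun j => (hu j).le) i).trans_lt (hMu i)) (hu i).le

/-- Minimum principle: if `x` took a negative value, then at an index minimising `x / u` the vector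
`x + c u ≥ 0` would vanish although it is a strict supersolution there. -/
theorem nonneg_of_mulVec_le (hs : HasStrictSupersolution M s) (hM : IsMetzler M) {x : ι → ℝ}
    (hx : M *ᵥ x ≤ s • x) : 0 ≤ x := by
  obtain ⟨u, hu, hMu⟩ := hs
  by_contra hneg
  obtain ⟨k, hk⟩ : ∃ k, x k < 0 := by simpa [Pi.le_def] using hneg
  obtain ⟨i, -, hmin⟩ := Finset.exists_min_image Finset.univ (fun j => x j / u j) ⟨k, by simp⟩
  have hc : x i / u i < 0 := (hmin k (Finset.mem_univ k)).trans_lt (div_neg_of_neg_of_pos hk (hu k))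
  have hy : 0 ≤ x - (x i / u i) • u := fun j => by
    have := (le_div_iff₀ (hu j)).1 (hmin j (Finset.mem_univ j))
    simpa using this
  have hyi : (x - (x i / u i) • u) i = 0 := by simp [(hu i).ne']
  have hdiag := hM.diag_mul_le_mulVec hy i
  rw [hyi, mul_zero, Matrix.mulVec_sub, Matrix.mulVec_smul] at hdiag
  have hlt : (M *ᵥ x - (x i / u i) • M *ᵥ u) i < s * (x - (x i / u i) • u) i := by
    simp only [Pi.sub_apply, Pi.smul_apply, smul_eq_mul]
    linarith [hx i, mul_lt_mul_of_neg_left (hMu i) hc, smul_eq_mul s (x i), Pi.smul_apply s x i]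
  rw [hyi, mul_zero] at hlt
  exact hlt.not_ge hdiag

theorem re_lt_of_mulVec_eq_smul {𝕜 : Type*} [RCLike 𝕜] (hs : HasStrictSupersolution M s)
    (hM : IsMetzler M) {μ : 𝕜} {z : ι → 𝕜} (hz₀ : z ≠ 0)
    (hz : M.map (algebraMap ℝ 𝕜) *ᵥ z = μ • z) : RCLike.re μ < s := by
  by_contra! hsμ
  have hneg : 0 ≤ -fun i => ‖z i‖ := (hs.mono hsμ).nonneg_of_mulVec_le hM <| by
    rw [Matrix.mulVec_neg, smul_neg]
    exact neg_le_neg (hM.re_smul_norm_le_mulVec_norm hz)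
  exact hz₀ (funext fun i => norm_le_zero_iff.1 (neg_nonneg.1 (hneg i)))

variable [DecidableEq ι]

theorem mem_resolventSet (hs : HasStrictSupersolution M s) (hM : IsMetzler M) :
    s ∈ resolventSet ℝ M := by
  by_contra hspec
  obtain ⟨x, hx₀, hx⟩ := mem_spectrum_iff_exists_mulVec_eq_smul.1 hspec
  exact lt_irrefl s (hs.re_lt_of_mulVec_eq_smul hM (𝕜 := ℝ) hx₀ hx)

theorem resolvent_mulVec_nonneg (hs : HasStrictSupersolution M s) (hM : IsMetzler M) (hu : 0 ≤ u) :
    0 ≤ resolvent M s *ᵥ u :=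
  hs.nonneg_of_mulVec_le hM <| sub_nonneg.1 <|
    (smul_resolvent_mulVec_sub (hs.mem_resolventSet hM) u).symm ▸ hu

end HasStrictSupersolution

theorem IsMetzler.exists_hasStrictSupersolution_iff_lt [Nonempty ι] (hM : IsMetzler M) :
    ∃ s₀, ∀ s, HasStrictSupersolution M s ↔ s₀ < s := by
  have hbdd : BddBelow {s | HasStrictSupersolution M s} :=
    ⟨M (Classical.arbitrary ι) (Classical.arbitrary ι), fun s hs => (hs.diag_lt hM _).le⟩
  refine ⟨sInf {s | HasStrictSupersolution M s}, fun s => ⟨fun hs => ?_, fun hs => ?_⟩⟩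
  · obtain ⟨r, hrs, hr⟩ := hs.exists_lt
    exact (csInf_le hbdd hr).trans_lt hrs
  · obtain ⟨r, hr, hrs⟩ := exists_lt_of_csInf_lt (exists_hasStrictSupersolution M) hs
    exact HasStrictSupersolution.mono hr hrs.le

variable [DecidableEq ι]

/-- Otherwise the resolvent would be continuous, hence nonnegative, at `s₀`, and its action on `1`
would be a strict supersolution there. -/
theorem IsMetzler.mem_spectrum_of_hasStrictSupersolution_iff_lt (hM : IsMetzler M) {s₀ : ℝ}
    (hs₀ : ∀ s, HasStrictSupersolution M s ↔ s₀ < s) : s₀ ∈ spectrum ℝ M := by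
  by_contra hres
  have hcont : ContinuousAt (fun s => resolvent M s *ᵥ 1) s₀ :=
    (continuous_id.matrix_mulVec continuous_const).continuousAt.comp
      (continuousAt_resolvent (not_not.1 hres))
  have hnonneg : 0 ≤ resolvent M s₀ *ᵥ 1 := by
    refine ge_of_tendsto (hcont.mono_left nhdsWithin_le_nhds : Tendsto _ (𝓝[>] s₀) _) ?_
    filter_upwards [self_mem_nhdsWithin] with s hs
    exact ((hs₀ s).2 hs).resolvent_mulVec_nonneg hM zero_le_one
  refine lt_irrefl s₀ ((hs₀ s₀).1 (hM.hasStrictSupersolution_of_nonneg hnonneg fun i => ?_))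
  have hi := congrFun (smul_resolvent_mulVec_sub (not_not.1 hres) (1 : ι → ℝ)) i
  simp only [Pi.sub_apply, Pi.smul_apply, smul_eq_mul, Pi.one_apply] at hi
  linarith

theorem IsMetzler.specAbs_eq_of_hasStrictSupersolution_iff_lt (hM : IsMetzler M) {s₀ : ℝ}
    (hs₀ : ∀ s, HasStrictSupersolution M s ↔ s₀ < s) : specAbs M = s₀ := by
  refine IsGreatest.csSup_eq ⟨⟨(s₀ : ℂ), ?_, Complex.ofReal_re s₀⟩, ?_⟩
  · obtain ⟨x, hx₀, hx⟩ := mem_spectrum_iff_exists_mulVec_eq_smul.1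
      (hM.mem_spectrum_of_hasStrictSupersolution_iff_lt hs₀)
    refine mem_spectrum_iff_exists_mulVec_eq_smul.2 ⟨fun i => (x i : ℂ), fun h => hx₀ ?_, ?_⟩
    · exact funext fun i => Complex.ofReal_eq_zero.1 (congrFun h i)
    · funext i
      have hi := RingHom.map_mulVec (algebraMap ℝ ℂ) M x i
      rw [hx] at hi
      simpa [Function.comp_def] using hi.symm
  · rintro _ ⟨μ, hμ, rfl⟩
    obtain ⟨z, hz₀, hz⟩ := mem_spectrum_iff_exists_mulVec_eq_smul.1 hμ
    exact le_of_forall_gt_imp_ge_of_dense fun s hs =>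
      (((hs₀ s).2 hs).re_lt_of_mulVec_eq_smul hM hz₀ hz).le

variable [Nonempty ι]

theorem IsMetzler.hasStrictSupersolution_iff_specAbs_lt (hM : IsMetzler M) :
    HasStrictSupersolution M s ↔ specAbs M < s := by
  obtain ⟨s₀, hs₀⟩ := hM.exists_hasStrictSupersolution_iff_lt
  rw [hM.specAbs_eq_of_hasStrictSupersolution_iff_lt hs₀, hs₀]

theorem IsMetzler.specAbs_mem_spectrum (hM : IsMetzler M) : specAbs M ∈ spectrum ℝ M :=
  hM.mem_spectrum_of_hasStrictSupersolution_iff_lt fun _ => hM.hasStrictSupersolution_iff_specAbs_lt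

end Metzler

/-! ### Harnack estimates and irreducible matrices -/

section Irreducible

variable {ι : Type*}

/-- The edges of the directed graph of the off-diagonal entries of `M`; `edgeRel` is the case of
the index type `Fin N`. -/
def OffDiagAdj (M : Matrix ι ι ℝ) (i j : ι) : Prop :=
  i ≠ j ∧ M i j ≠ 0

/-- Irreducibility of `M`, as strong connectivity of the directed graph of its off-diagonal
entries; a `1 × 1` matrix is always irreducible in this sense. -/
def OffDiagIrreducible (M : Matrix ι ι ℝ) : Prop :=
  ∀ i j, Relation.ReflTransGen (OffDiagAdj M) i j

theorem OffDiagIrreducible.transpose {M : Matrix ι ι ℝ} (hM : OffDiagIrreducible M) :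
    OffDiagIrreducible Mᵀ := fun i j =>
  Relation.ReflTransGen.mono (fun _ _ h => ⟨h.1.symm, h.2⟩) _ _
    (Relation.reflTransGen_swap.2 (hM j i))

variable [Fintype ι] {M : Matrix ι ι ℝ}

section Harnack

variable {α : Type*} {l : Filter α} {s : α → ℝ} {u : α → ι → ℝ} {i j : ι}

theorem IsMetzler.isBigO_of_offDiagAdj (hM : IsMetzler M) (hs : l.IsBoundedUnder (· ≤ ·) s)
    (hu : ∀ᶠ a in l, 0 ≤ u a) (hMu : ∀ᶠ a in l, M *ᵥ u a ≤ s a • u a) (hij : OffDiagAdj M i j) :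
    (fun a => u a j) =O[l] fun a => u a i := by
  obtain ⟨C, hC⟩ := hs
  have hMij : 0 < M i j := (hM i j hij.1).lt_of_ne' hij.2
  refine IsBigO.of_bound ((C - M i i) / M i j) ?_
  filter_upwards [hu, hMu, eventually_map.1 hC] with a hua hMua hsa
  rw [Real.norm_of_nonneg (hua i), Real.norm_of_nonneg (hua j), div_mul_eq_mul_div,
    le_div_iff₀' hMij]
  have hCa : s a * u a i ≤ C * u a i := mul_le_mul_of_nonneg_right hsa (hua i)
  have hrow : (M *ᵥ u a) i ≤ s a * u a i := hMua i
  linarith [hM.add_le_mulVec hua hij.1]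

theorem IsMetzler.isBigO_of_reflTransGen (hM : IsMetzler M) (hs : l.IsBoundedUnder (· ≤ ·) s)
    (hu : ∀ᶠ a in l, 0 ≤ u a) (hMu : ∀ᶠ a in l, M *ᵥ u a ≤ s a • u a)
    (hij : Relation.ReflTransGen (OffDiagAdj M) i j) :
    (fun a => u a j) =O[l] fun a => u a i := by
  induction hij with
  | refl => exact isBigO_refl _ l
  | tail _ hedge ih => exact (hM.isBigO_of_offDiagAdj hs hu hMu hedge).trans ih

end Harnack

theorem isBoundedUnder_const_add_nhdsGT_zero (ζ : ℝ) :
    (𝓝[>] (0 : ℝ)).IsBoundedUnder (· ≤ ·) fun t => ζ + t :=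
  ((continuous_const_add ζ).continuousAt.mono_left nhdsWithin_le_nhds).isBoundedUnder_le

variable [DecidableEq ι] [Nonempty ι]

variable {ζ : ℝ} {v f : ℝ → ι → ℝ}

theorem IsMetzler.nonneg_of_smul_sub_mulVec_nonneg (hM : IsMetzler M) (hζ : specAbs M < ζ)
    {x : ι → ℝ} (hx : 0 ≤ ζ • x - M *ᵥ x) : 0 ≤ x :=
  (hM.hasStrictSupersolution_iff_specAbs_lt.2 hζ).nonneg_of_mulVec_le hM (sub_nonneg.1 hx)

theorem IsMetzler.eventually_nonneg_of_smul_sub_mulVec_eq (hM : IsMetzler M) (hζ : specAbs M ≤ ζ)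
    (hf : ∀ᶠ t in 𝓝[>] 0, 0 ≤ f t)
    (hv : ∀ᶠ t in 𝓝[>] 0, (ζ + t) • v t - M *ᵥ v t = f t) : ∀ᶠ t in 𝓝[>] 0, 0 ≤ v t := by
  filter_upwards [hf, hv, self_mem_nhdsWithin] with t hft hvt ht
  exact hM.nonneg_of_smul_sub_mulVec_nonneg (hζ.trans_lt (lt_add_of_pos_right ζ ht)) (hvt ▸ hft)

theorem IsMetzler.isBigO_apply_of_reflTransGen (hM : IsMetzler M) (hζ : specAbs M ≤ ζ)
    (hf : ∀ᶠ t in 𝓝[>] 0, 0 ≤ f t)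
    (hv : ∀ᶠ t in 𝓝[>] 0, (ζ + t) • v t - M *ᵥ v t = f t) {i j : ι}
    (hij : Relation.ReflTransGen (OffDiagAdj M) i j) :
    (fun t => v t j) =O[𝓝[>] 0] fun t => v t i := by
  refine hM.isBigO_of_reflTransGen (isBoundedUnder_const_add_nhdsGT_zero ζ)
    (hM.eventually_nonneg_of_smul_sub_mulVec_eq hζ hf hv) ?_ hij
  filter_upwards [hf, hv] with t hft hvt
  exact sub_nonneg.1 (hvt ▸ hft)

/-- The solution `x` of `(ζ(M) + t) x - M x = 1`. Its coordinates measure how fast the resolvent of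
`M` blows up at the spectral abscissa as `t` decreases to `0`. -/
noncomputable def resolventOnes (M : Matrix ι ι ℝ) (t : ℝ) : ι → ℝ :=
  resolvent M (specAbs M + t) *ᵥ 1

theorem IsMetzler.smul_resolventOnes_sub (hM : IsMetzler M) {t : ℝ} (ht : 0 < t) :
    (specAbs M + t) • resolventOnes M t - M *ᵥ resolventOnes M t = 1 :=
  smul_resolvent_mulVec_sub ((hM.hasStrictSupersolution_iff_specAbs_lt.2
    (lt_add_of_pos_right _ ht)).mem_resolventSet hM) 1

theorem IsMetzler.eventually_smul_resolventOnes_sub (hM : IsMetzler M) :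
    ∀ᶠ t in 𝓝[>] 0, (specAbs M + t) • resolventOnes M t - M *ᵥ resolventOnes M t = 1 := by
  filter_upwards [self_mem_nhdsWithin] with t ht
  exact hM.smul_resolventOnes_sub ht

theorem IsMetzler.resolventOnes_nonneg (hM : IsMetzler M) {t : ℝ} (ht : 0 < t) :
    0 ≤ resolventOnes M t :=
  hM.nonneg_of_smul_sub_mulVec_nonneg (lt_add_of_pos_right _ ht)
    ((hM.smul_resolventOnes_sub ht).symm ▸ zero_le_one)

theorem IsMetzler.resolventOnes_apply_ne_zero (hM : IsMetzler M) {t : ℝ} (ht : 0 < t) (i : ι) :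
    resolventOnes M t i ≠ 0 := by
  intro hi
  have hrow := congrFun (hM.smul_resolventOnes_sub ht) i
  have hdiag := hM.diag_mul_le_mulVec (hM.resolventOnes_nonneg ht) i
  simp only [Pi.sub_apply, Pi.smul_apply, smul_eq_mul, Pi.one_apply, hi, mul_zero] at hrow hdiag
  linarith

theorem IsMetzler.resolventOnes_isBigO_of_reflTransGen (hM : IsMetzler M) {i j : ι}
    (hij : Relation.ReflTransGen (OffDiagAdj M) i j) :
    (fun t => resolventOnes M t j) =O[𝓝[>] 0] fun t => resolventOnes M t i :=
  hM.isBigO_apply_of_reflTransGen le_rfl (Eventually.of_forall fun _ => zero_le_one)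
    hM.eventually_smul_resolventOnes_sub hij

theorem IsMetzler.norm_resolvent_mulVec_apply_le (hM : IsMetzler M) {t : ℝ} (ht : 0 < t) (x : ι → ℝ)
    (i : ι) : ‖(resolvent M (specAbs M + t) *ᵥ x) i‖ ≤ ‖x‖ * resolventOnes M t i := by
  have hs := hM.hasStrictSupersolution_iff_specAbs_lt.2 (lt_add_of_pos_right (specAbs M) ht)
  have hbound (j : ι) : -‖x‖ ≤ x j ∧ x j ≤ ‖x‖ := abs_le.1 (norm_le_pi_norm x j)
  have hupper := hs.resolvent_mulVec_nonneg hM (u := ‖x‖ • 1 - x)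
    (fun j => by simpa using (hbound j).2) i
  have hlower := hs.resolvent_mulVec_nonneg hM (u := ‖x‖ • 1 + x)
    (fun j => by simpa using neg_le_iff_add_nonneg'.1 (hbound j).1) i
  rw [Matrix.mulVec_sub, Matrix.mulVec_smul] at hupper
  rw [Matrix.mulVec_add, Matrix.mulVec_smul] at hlower
  exact abs_le.2 ⟨neg_le_iff_add_nonneg'.2 hlower, sub_nonneg.1 hupper⟩

theorem IsMetzler.resolventOnes_isBigO_inv_pow_iff (hM : IsMetzler M) {d : ℕ} :
    (resolventOnes M =O[𝓝[>] 0] fun t => t⁻¹ ^ d) ↔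
      LinearMap.ker ((M - specAbs M • 1) ^ (d + 1)).mulVecLin ≤
        LinearMap.ker ((M - specAbs M • 1) ^ d).mulVecLin := by
  have hshift (t : ℝ) (x : ι → ℝ) :
      t • x - (M - specAbs M • 1) *ᵥ x = (specAbs M + t) • x - M *ᵥ x := by
    rw [Matrix.sub_mulVec, Matrix.smul_mulVec, Matrix.one_mulVec, add_smul]
    abel
  have hl : 𝓝[>] (0 : ℝ) ≤ 𝓝[≠] 0 := nhdsGT_le_nhdsNE 0
  constructor
  · intro hgrowth b hb
    have hres {t : ℝ} (ht : 0 < t) : specAbs M + t ∈ resolventSet ℝ M :=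
      (hM.hasStrictSupersolution_iff_specAbs_lt.2 (lt_add_of_pos_right _ ht)).mem_resolventSet hM
    refine pow_mulVec_eq_zero_of_isBigO_inv_pow
      (u := fun t => resolvent M (specAbs M + t) *ᵥ b) hl ?_ ?_ ?_ hb
    · filter_upwards [self_mem_nhdsWithin] with t ht
      rw [hshift, smul_resolvent_mulVec_sub (hres ht)]
    · filter_upwards [self_mem_nhdsWithin] with t ht
      rw [spectrum.mem_resolventSet_iff, sub_sub_eq_add_sub, ← Algebra.algebraMap_eq_smul_one,
        ← map_add, add_comm]
      exact hres ht
    · refine isBigO_pi.2 fun i => IsBigO.trans ?_ (isBigO_pi.1 hgrowth i)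
      refine IsBigO.of_bound ‖b‖ ?_
      filter_upwards [self_mem_nhdsWithin] with t ht
      rw [Real.norm_of_nonneg (hM.resolventOnes_nonneg ht i)]
      exact hM.norm_resolvent_mulVec_apply_le ht b i
  · intro hker
    refine isBigO_inv_pow_of_ker_pow_le (b := 1) hker hl ?_
    simpa only [hshift] using hM.eventually_smul_resolventOnes_sub

theorem IsMetzler.exists_nonneg_specAbs_smul_le_vecMul (hM : IsMetzler M) :
    ∃ w : ι → ℝ, 0 ≤ w ∧ w ≠ 0 ∧ specAbs M • w ≤ w ᵥ* M := by
  have hspec : specAbs M ∈ spectrum ℝ Mᵀ := by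
    have hunit := hM.specAbs_mem_spectrum
    rwa [spectrum.mem_iff, ← Matrix.isUnit_transpose, Matrix.transpose_sub,
      Matrix.algebraMap_eq_diagonal, Matrix.diagonal_transpose, ← Matrix.algebraMap_eq_diagonal,
      ← spectrum.mem_iff] at hunit
  obtain ⟨z, hz₀, hz⟩ := mem_spectrum_iff_exists_mulVec_eq_smul.1 hspec
  refine ⟨fun i => ‖z i‖, fun i => norm_nonneg _, fun h => hz₀ ?_, ?_⟩
  · exact funext fun i => norm_eq_zero.1 (congrFun h i)
  · rw [← Matrix.mulVec_transpose]
    exact hM.transpose.re_smul_norm_le_mulVec_norm (𝕜 := ℝ) hz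

theorem IsMetzler.sub_dotProduct_resolventOnes_le (hM : IsMetzler M) {w : ι → ℝ} (hw : 0 ≤ w)
    {t : ℝ} (ht : 0 < t) :
    (w ᵥ* M - specAbs M • w) ⬝ᵥ resolventOnes M t ≤ t * w ⬝ᵥ resolventOnes M t := by
  have hpair : w ⬝ᵥ ((specAbs M + t) • resolventOnes M t - M *ᵥ resolventOnes M t) ≥ 0 :=
    hM.smul_resolventOnes_sub ht ▸ dotProduct_nonneg_of_nonneg hw zero_le_one
  rw [dotProduct_sub, dotProduct_smul, dotProduct_mulVec, smul_eq_mul] at hpair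
  rw [sub_dotProduct, smul_dotProduct, smul_eq_mul]
  linarith

/-- The defect `q = w M - ζ w ≥ 0` pairs with `u = resolventOnes M t` to at most `t (w ⬝ u)`, which
is of smaller order than every coordinate of `u`; so `q j = 0` for every `j`. -/
theorem IsMetzler.vecMul_eq_of_specAbs_smul_le_vecMul (hM : IsMetzler M)
    (hirr : OffDiagIrreducible M) {w : ι → ℝ} (hw : 0 ≤ w) (hwM : specAbs M • w ≤ w ᵥ* M) :
    w ᵥ* M = specAbs M • w := by
  set q := w ᵥ* M - specAbs M • w
  have hq : 0 ≤ q := sub_nonneg.2 hwM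
  refine sub_eq_zero.1 (funext fun j => by_contra fun hqj => ?_)
  have hdefect : (fun t => q j * resolventOnes M t j) =O[𝓝[>] 0]
      fun t => t * w ⬝ᵥ resolventOnes M t := by
    refine IsBigO.of_norm_eventuallyLE ?_
    filter_upwards [self_mem_nhdsWithin] with t ht
    have hu := hM.resolventOnes_nonneg ht
    rw [Real.norm_of_nonneg (mul_nonneg (hq j) (hu j))]
    exact (Finset.single_le_sum (fun k _ => mul_nonneg (hq k) (hu k)) (Finset.mem_univ j)).trans
      (hM.sub_dotProduct_resolventOnes_le hw ht)
  have hpair : (fun t => w ⬝ᵥ resolventOnes M t) =O[𝓝[>] 0] fun t => resolventOnes M t j :=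
    IsBigO.fun_sum fun k _ =>
      (hM.resolventOnes_isBigO_of_reflTransGen (hirr j k)).const_mul_left (w k)
  have hid : (fun t : ℝ => t) =o[𝓝[>] 0] fun _ => (1 : ℝ) :=
    (isLittleO_one_iff ℝ).2 nhdsWithin_le_nhds
  have hsmall : (fun t => resolventOnes M t j) =o[𝓝[>] 0] fun t => resolventOnes M t j := by
    refine (isLittleO_const_mul_left_iff hqj).1 (hdefect.trans_isLittleO ?_)
    simpa using hid.mul_isBigO hpair
  refine isLittleO_irrefl (Eventually.frequently ?_) hsmall
  filter_upwards [self_mem_nhdsWithin] with t ht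
  exact hM.resolventOnes_apply_ne_zero ht j

theorem IsMetzler.exists_pos_vecMul_eq_specAbs_smul (hM : IsMetzler M)
    (hirr : OffDiagIrreducible M) : ∃ w : ι → ℝ, (∀ i, 0 < w i) ∧ w ᵥ* M = specAbs M • w := by
  obtain ⟨w, hw, hw₀, hwM⟩ := hM.exists_nonneg_specAbs_smul_le_vecMul
  have heigen := hM.vecMul_eq_of_specAbs_smul_le_vecMul hirr hw hwM
  refine ⟨w, fun i => (hw i).lt_of_ne' fun hi => ?_, heigen⟩
  obtain ⟨k, hk⟩ := Function.ne_iff.1 hw₀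
  have hki : (fun _ : Unit => w k) =O[⊤] fun _ => w i :=
    hM.transpose.isBigO_of_reflTransGen (s := fun _ => specAbs M) isBoundedUnder_const
      (Eventually.of_forall fun _ => hw)
      (Eventually.of_forall fun _ => by rw [Matrix.mulVec_transpose, heigen])
      (hirr.transpose i k)
  exact hk ((isBigO_const_const_iff _).1 hki hi)

theorem IsMetzler.isTheta_inv_mul_sum (hM : IsMetzler M) (hirr : OffDiagIrreducible M)
    (hf : ∀ᶠ t in 𝓝[>] 0, 0 ≤ f t)
    (hv : ∀ᶠ t in 𝓝[>] 0, (specAbs M + t) • v t - M *ᵥ v t = f t) (i : ι) :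
    (fun t => v t i) =Θ[𝓝[>] 0] fun t => t⁻¹ * ∑ j, f t j := by
  obtain ⟨w, hw, hwM⟩ := hM.exists_pos_vecMul_eq_specAbs_smul hirr
  have hv₀ := hM.eventually_nonneg_of_smul_sub_mulVec_eq le_rfl hf hv
  have hsum : (fun t => v t i) =Θ[𝓝[>] 0] fun t => ∑ j, v t j :=
    ⟨isBigO_sum_of_nonneg hv₀ i, IsBigO.fun_sum fun j _ =>
      hM.isBigO_apply_of_reflTransGen le_rfl hf hv (hirr i j)⟩
  have hpair : (fun t => w ⬝ᵥ v t) =ᶠ[𝓝[>] 0] fun t => t⁻¹ * w ⬝ᵥ f t := by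
    filter_upwards [hv, self_mem_nhdsWithin] with t hvt ht
    rw [← hvt, dotProduct_sub, dotProduct_smul, dotProduct_mulVec, hwM, smul_dotProduct,
      smul_eq_mul, smul_eq_mul, ← sub_mul, add_sub_cancel_left, inv_mul_cancel_left₀ (ne_of_gt ht)]
  calc (fun t => v t i)
      =Θ[𝓝[>] 0] fun t => ∑ j, v t j := hsum
    _ =Θ[𝓝[>] 0] fun t => w ⬝ᵥ v t := (isTheta_dotProduct_sum hw hv₀).symm
    _ =ᶠ[𝓝[>] 0] fun t => t⁻¹ * w ⬝ᵥ f t := hpair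
    _ =Θ[𝓝[>] 0] fun t => t⁻¹ * ∑ j, f t j := isTheta_rfl.mul (isTheta_dotProduct_sum hw hf)

theorem IsMetzler.isBigO_sum_of_specAbs_lt (hM : IsMetzler M) (hζ : specAbs M < ζ)
    (hf : ∀ᶠ t in 𝓝[>] 0, 0 ≤ f t)
    (hv : ∀ᶠ t in 𝓝[>] 0, (ζ + t) • v t - M *ᵥ v t = f t) (i : ι) :
    (fun t => v t i) =O[𝓝[>] 0] fun t => ∑ j, f t j := by
  have hres {s : ℝ} (hs : specAbs M < s) : s ∈ resolventSet ℝ M :=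
    (hM.hasStrictSupersolution_iff_specAbs_lt.2 hs).mem_resolventSet hM
  have hcont : ContinuousAt (fun t => resolvent M (ζ + t)) 0 :=
    ContinuousAt.comp (g := resolvent M) (by simpa using continuousAt_resolvent (hres hζ))
      (continuous_const_add ζ).continuousAt
  have hbdd (j : ι) : (fun t => resolvent M (ζ + t) i j) =O[𝓝[>] 0] fun _ => (1 : ℝ) :=
    ((continuous_id.matrix_elem i j).continuousAt.tendsto.comp
      (hcont.mono_left nhdsWithin_le_nhds)).isBigO_one ℝ
  have hv' : (fun t => ∑ j, resolvent M (ζ + t) i j * f t j) =ᶠ[𝓝[>] 0] fun t => v t i := by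
    filter_upwards [hv, self_mem_nhdsWithin] with t hvt ht
    exact (congrFun (eq_resolvent_mulVec (hres (hζ.trans (lt_add_of_pos_right ζ ht))) hvt) i).symm
  refine IsBigO.congr' (IsBigO.fun_sum fun j _ => ?_) hv' EventuallyEq.rfl
  simpa using (hbdd j).mul (isBigO_sum_of_nonneg hf j)

theorem IsMetzler.sum_isBigO_of_specAbs_le (hM : IsMetzler M) (hirr : OffDiagIrreducible M)
    (hζ : specAbs M ≤ ζ) (hf : ∀ᶠ t in 𝓝[>] 0, 0 ≤ f t)
    (hv : ∀ᶠ t in 𝓝[>] 0, (ζ + t) • v t - M *ᵥ v t = f t) (i : ι) :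
    (fun t => ∑ j, f t j) =O[𝓝[>] 0] fun t => v t i := by
  refine IsBigO.fun_sum fun j _ => IsBigO.trans ?_
    (hM.isBigO_apply_of_reflTransGen hζ hf hv (hirr i j))
  have hbdd : (fun t => ζ + t - M j j) =O[𝓝[>] 0] fun _ => (1 : ℝ) :=
    ((by fun_prop : Continuous fun t => ζ + t - M j j).continuousAt.mono_left
      nhdsWithin_le_nhds).isBigO_one ℝ
  have hle : (fun t => f t j) =O[𝓝[>] 0] fun t => (ζ + t - M j j) * v t j := by
    refine IsBigO.of_norm_eventuallyLE ?_
    filter_upwards [hf, hv, hM.eventually_nonneg_of_smul_sub_mulVec_eq hζ hf hv] with t hft hvt hv₀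
    rw [Real.norm_of_nonneg (hft j), ← hvt, sub_mul]
    exact sub_le_sub_left (hM.diag_mul_le_mulVec hv₀ j) _
  simpa using hle.trans (hbdd.mul (isBigO_refl (fun t => v t j) _))

end Irreducible

/-! ### Classes and chains of classes -/

section Classes

theorem exists_exit_of_reflTransGen {α : Type*} {r : α → α → Prop} {p : α → Prop} {a b : α}
    (hab : Relation.ReflTransGen r a b) (ha : p a) (hb : ¬p b) :
    ∃ c d, p c ∧ ¬p d ∧ r c d ∧ Relation.ReflTransGen r d b := by
  induction hab using Relation.ReflTransGen.head_induction_on with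
  | refl => exact absurd ha hb
  | @head c d hcd hdb ih =>
    by_cases hd : p d
    · exact ih hd
    · exact ⟨c, d, ha, hd, hcd, hdb⟩

variable {B : Matrix (Fin N) (Fin N) ℝ} {γ δ : Set (Fin N)} {i j k : Fin N}

/-- The class of `B` containing the vertex `i`. -/
def classOf (B : Matrix (Fin N) (Fin N) ℝ) (i : Fin N) : Set (Fin N) :=
  {j | access B i j ∧ access B j i}

theorem isClass_classOf (B : Matrix (Fin N) (Fin N) ℝ) (i : Fin N) : IsClass B (classOf B i) :=
  ⟨i, rfl⟩

theorem mem_classOf_self (B : Matrix (Fin N) (Fin N) ℝ) (i : Fin N) : i ∈ classOf B i :=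
  ⟨.refl, .refl⟩

namespace IsClass

protected theorem access (hγ : IsClass B γ) (hi : i ∈ γ) (hj : j ∈ γ) : access B i j := by
  obtain ⟨m, rfl⟩ := hγ
  exact hi.2.trans hj.1

theorem mem_of_access (hγ : IsClass B γ) (hi : i ∈ γ) (hij : access B i j)
    (hji : access B j i) : j ∈ γ := by
  obtain ⟨m, rfl⟩ := hγ
  exact ⟨hi.1.trans hij, hji.trans hi.2⟩

theorem eq_of_mem (hγ : IsClass B γ) (hδ : IsClass B δ) (hiγ : i ∈ γ) (hiδ : i ∈ δ) : γ = δ :=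
  Set.ext fun _ =>
    ⟨fun hj => hδ.mem_of_access hiδ (hγ.access hiγ hj) (hγ.access hj hiγ),
      fun hj => hγ.mem_of_access hiγ (hδ.access hiδ hj) (hδ.access hj hiδ)⟩

theorem nonempty (hγ : IsClass B γ) : γ.Nonempty := by
  obtain ⟨m, rfl⟩ := hγ
  exact ⟨m, mem_classOf_self B m⟩

theorem offDiagIrreducible_subMat (hγ : IsClass B γ) : OffDiagIrreducible (subMat B γ) := by
  rintro ⟨i, hi⟩ ⟨j, hj⟩
  have hij : access B i j := hγ.access hi hj
  induction hij using Relation.ReflTransGen.head_induction_on with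
  | refl => exact .refl
  | @head a b hab hbj ih =>
    have hb : b ∈ γ := hγ.mem_of_access hi (.single hab) (hbj.trans (hγ.access hj hi))
    have hedge : OffDiagAdj (subMat B γ) ⟨a, hi⟩ ⟨b, hb⟩ :=
      ⟨fun h => hab.1 (congrArg Subtype.val h), hab.2⟩
    exact .head hedge (ih hb)

end IsClass

theorem isClassChain_nil (B : Matrix (Fin N) (Fin N) ℝ) : IsClassChain B [] :=
  ⟨fun _ h => absurd h List.not_mem_nil, .nil⟩

theorem isClassChain_singleton (hγ : IsClass B γ) : IsClassChain B [γ] :=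
  ⟨fun _ h => List.mem_singleton.1 h ▸ hγ, .singleton γ⟩

theorem isClassChain_cons_cons {l : List (Set (Fin N))} :
    IsClassChain B (γ :: δ :: l) ↔
      IsClass B γ ∧ (classAccess B γ δ ∧ γ ≠ δ) ∧ IsClassChain B (δ :: l) := by
  constructor
  · rintro ⟨hclass, hchain⟩
    obtain ⟨hγ, hδl⟩ := List.forall_mem_cons.1 hclass
    obtain ⟨hγδ, htail⟩ := List.isChain_cons_cons.1 hchain
    exact ⟨hγ, hγδ, hδl, htail⟩
  · rintro ⟨hγ, hγδ, hδl, htail⟩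
    exact ⟨List.forall_mem_cons.2 ⟨hγ, hδl⟩, List.isChain_cons_cons.2 ⟨hγδ, htail⟩⟩

theorem chainLen_cons (B : Matrix (Fin N) (Fin N) ℝ) (γ : Set (Fin N)) (l : List (Set (Fin N))) :
    chainLen B (γ :: l) = chainLen B [γ] + chainLen B l :=
  List.countP_append (l₁ := [γ])

theorem chainLen_singleton_of_isBasic (hγ : IsBasic B γ) : chainLen B [γ] = 1 := by
  simp [chainLen, hγ]

theorem chainLen_singleton_of_not_isBasic (hγ : ¬IsBasic B γ) : chainLen B [γ] = 0 := by
  simp [chainLen, hγ]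

/-- The chain is headed by the class of a strict successor of `i` whose own chain is longest. -/
theorem exists_isClassChain_cons_classOf {P : Fin N → ℕ → Prop}
    (hmono : ∀ k m n, m ≤ n → P k m → P k n)
    (hsucc : ∀ k, access B i k → ¬access B k i →
      ∃ l, IsClassChain B (classOf B k :: l) ∧ P k (chainLen B (classOf B k :: l))) :
    ∃ l, IsClassChain B (classOf B i :: l) ∧
      ∀ k, access B i k → ¬access B k i → P k (chainLen B l) := by
  choose! chain hchain hP using hsucc
  rcases {k | access B i k ∧ ¬access B k i}.eq_empty_or_nonempty with hempty | hne
  · exact ⟨[], isClassChain_singleton (isClass_classOf B i),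
      fun k hik hki => (Set.eq_empty_iff_forall_notMem.1 hempty k ⟨hik, hki⟩).elim⟩
  · obtain ⟨m, ⟨him, hmi⟩, hmax⟩ := Set.exists_max_image _
      (fun k => chainLen B (classOf B k :: chain k)) (Set.toFinite _) hne
    refine ⟨classOf B m :: chain m, isClassChain_cons_cons.2 ⟨isClass_classOf B i, ⟨?_, ?_⟩,
      hchain m him hmi⟩, fun k hik hki => hmono k _ _ (hmax k ⟨hik, hki⟩) (hP k hik hki)⟩
    · exact ⟨i, mem_classOf_self B i, m, mem_classOf_self B m, him⟩
    · intro h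
      have hm : m ∈ classOf B i := h ▸ mem_classOf_self B m
      exact hmi hm.2

end Classes

section Blocks

variable {B : Matrix (Fin N) (Fin N) ℝ} {γ : Set (Fin N)}

protected theorem IsMetzler.subMat (hB : IsMetzler B) (γ : Set (Fin N)) : IsMetzler (subMat B γ) :=
  fun i j hij => hB i j (Subtype.coe_injective.ne hij)

/-- The contribution to `(B x) j`, for `j ∈ γ`, of the coordinates of `x` outside `γ`. -/
noncomputable def outflow (B : Matrix (Fin N) (Fin N) ℝ) (γ : Set (Fin N)) (x : Fin N → ℝ)
    (j : γ) : ℝ :=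
  ∑ k : ↥γᶜ, B j k * x k

theorem mulVec_eq_subMat_mulVec_add_outflow (B : Matrix (Fin N) (Fin N) ℝ) (x : Fin N → ℝ)
    (j : γ) : (B *ᵥ x) j = (subMat B γ *ᵥ fun k => x k) j + outflow B γ x j :=
  (Fintype.sum_subtype_add_sum_subtype (· ∈ γ) fun k => B j k * x k).symm

theorem IsMetzler.mul_le_outflow (hB : IsMetzler B) {x : Fin N → ℝ} (hx : 0 ≤ x) (j : γ)
    {k : Fin N} (hk : k ∉ γ) : B j k * x k ≤ outflow B γ x j :=
  Finset.single_le_sum (f := fun k : ↥γᶜ => B j k * x k)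
    (fun k _ => mul_nonneg (hB j k (ne_of_mem_of_not_mem j.2 k.2)) (hx k))
    (Finset.mem_univ ⟨k, hk⟩)

theorem IsMetzler.outflow_nonneg (hB : IsMetzler B) {x : Fin N → ℝ} (hx : 0 ≤ x) :
    0 ≤ outflow B γ x :=
  fun j => Finset.sum_nonneg fun k _ =>
    mul_nonneg (hB j k (ne_of_mem_of_not_mem j.2 k.2)) (hx k)

theorem IsMetzler.specAbs_subMat_le [NeZero N] [Nonempty γ] (hB : IsMetzler B) :
    specAbs (subMat B γ) ≤ specAbs B := by
  refine le_of_forall_gt_imp_ge_of_dense fun s hs => ?_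
  obtain ⟨u, hu, hBu⟩ := hB.hasStrictSupersolution_iff_specAbs_lt.2 hs
  refine ((hB.subMat γ).hasStrictSupersolution_iff_specAbs_lt.1
    ⟨fun j => u j, fun j => hu j, fun j => (hBu j).trans_le' ?_⟩).le
  rw [mulVec_eq_subMat_mulVec_add_outflow (γ := γ)]
  exact le_add_of_nonneg_right (hB.outflow_nonneg (fun k => (hu k).le) j)

end Blocks

/-! ### Growth of the resolvent along chains of classes -/

section Growth

variable {B : Matrix (Fin N) (Fin N) ℝ} {γ : Set (Fin N)} {i k : Fin N}

/-- The right-hand side of the equation that the restriction of `resolventOnes B t` to the index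
set `γ` satisfies for the principal submatrix of `B` on `γ`. -/
noncomputable def classForcing (B : Matrix (Fin N) (Fin N) ℝ) (γ : Set (Fin N)) (t : ℝ) : γ → ℝ :=
  1 + outflow B γ (resolventOnes B t)

theorem IsClass.sum_classForcing_isBigO (hγ : IsClass B γ) {n : ℕ} (hi : i ∈ γ)
    (hsucc : ∀ k, access B i k → ¬access B k i →
      (fun t => resolventOnes B t k) =O[𝓝[>] 0] fun t => t⁻¹ ^ n) :
    (fun t => ∑ j, classForcing B γ t j) =O[𝓝[>] 0] fun t => t⁻¹ ^ n := by
  have hone : (fun _ => (1 : ℝ)) =O[𝓝[>] 0] fun t : ℝ => t⁻¹ ^ n := by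
    simpa using inv_pow_isBigO_inv_pow_iff.2 n.zero_le
  refine IsBigO.fun_sum fun j _ => hone.add (IsBigO.fun_sum fun k _ => ?_)
  rcases eq_or_ne (B j k) 0 with hjk | hjk
  · simpa [hjk] using isBigO_zero _ _
  · have hik : access B i k :=
      (hγ.access hi j.2).tail ⟨ne_of_mem_of_not_mem j.2 k.2, hjk⟩
    exact (hsucc k hik fun hki => k.2 (hγ.mem_of_access hi hik hki)).const_mul_left _

variable [NeZero N]

theorem IsMetzler.eventually_one_le_classForcing (hB : IsMetzler B) (γ : Set (Fin N)) :
    ∀ᶠ t in 𝓝[>] 0, 1 ≤ classForcing B γ t := by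
  filter_upwards [self_mem_nhdsWithin] with t ht
  exact le_add_of_nonneg_right (hB.outflow_nonneg (hB.resolventOnes_nonneg ht))

theorem IsMetzler.eventually_nonneg_classForcing (hB : IsMetzler B) (γ : Set (Fin N)) :
    ∀ᶠ t in 𝓝[>] 0, 0 ≤ classForcing B γ t :=
  (hB.eventually_one_le_classForcing γ).mono fun _ h => zero_le_one.trans h

theorem IsMetzler.eventually_smul_sub_subMat_mulVec_eq_classForcing (hB : IsMetzler B)
    (γ : Set (Fin N)) : ∀ᶠ t in 𝓝[>] 0, ((specAbs B + t) • fun j : γ => resolventOnes B t j) -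
      (subMat B γ *ᵥ fun j => resolventOnes B t j) = classForcing B γ t := by
  filter_upwards [self_mem_nhdsWithin] with t ht
  funext j
  have hrow := congrFun (hB.smul_resolventOnes_sub ht) j
  rw [Pi.sub_apply, mulVec_eq_subMat_mulVec_add_outflow (γ := γ)] at hrow
  simp only [classForcing, Pi.sub_apply, Pi.add_apply, Pi.smul_apply, Pi.one_apply] at hrow ⊢
  linarith

theorem IsClass.resolventOnes_isTheta (hγ : IsClass B γ) (hB : IsMetzler B) (hi : i ∈ γ) :
    (fun t => resolventOnes B t i) =Θ[𝓝[>] 0]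
      fun t => t⁻¹ ^ chainLen B [γ] * ∑ j, classForcing B γ t j := by
  have := hγ.nonempty.to_subtype
  have hirr := hγ.offDiagIrreducible_subMat
  have hf := hB.eventually_nonneg_classForcing γ
  have hv := hB.eventually_smul_sub_subMat_mulVec_eq_classForcing γ
  by_cases hbasic : IsBasic B γ
  · rw [← hbasic] at hv
    simpa [chainLen_singleton_of_isBasic hbasic] using
      (hB.subMat γ).isTheta_inv_mul_sum hirr hf hv ⟨i, hi⟩
  · have hlt : specAbs (subMat B γ) < specAbs B := hB.specAbs_subMat_le.lt_of_ne hbasic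
    simp only [chainLen_singleton_of_not_isBasic hbasic, pow_zero, one_mul]
    exact ⟨(hB.subMat γ).isBigO_sum_of_specAbs_lt hlt hf hv ⟨i, hi⟩,
      (hB.subMat γ).sum_isBigO_of_specAbs_le hirr hlt.le hf hv ⟨i, hi⟩⟩

theorem IsClass.inv_pow_isBigO_resolventOnes (hγ : IsClass B γ) (hB : IsMetzler B) (hi : i ∈ γ) :
    (fun t => t⁻¹ ^ chainLen B [γ]) =O[𝓝[>] 0] fun t => resolventOnes B t i := by
  have hone : (fun _ => (1 : ℝ)) =O[𝓝[>] 0] fun t => ∑ j, classForcing B γ t j := by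
    refine IsBigO.trans (IsBigO.of_norm_eventuallyLE ?_)
      (isBigO_sum_of_nonneg (hB.eventually_nonneg_classForcing γ) ⟨i, hi⟩)
    filter_upwards [hB.eventually_one_le_classForcing γ] with t ht
    simpa using ht ⟨i, hi⟩
  simpa using ((isBigO_refl _ _).mul hone).trans (hγ.resolventOnes_isTheta hB hi).isBigO_symm

theorem IsClass.inv_pow_mul_resolventOnes_isBigO (hγ : IsClass B γ) (hB : IsMetzler B)
    (hi : i ∈ γ) (hk : k ∉ γ) (hik : access B i k) :
    (fun t => t⁻¹ ^ chainLen B [γ] * resolventOnes B t k) =O[𝓝[>] 0]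
      fun t => resolventOnes B t i := by
  obtain ⟨a, b, ha, hb, hab, hbk⟩ := exists_exit_of_reflTransGen (p := (· ∈ γ)) hik hi hk
  have hedge : (fun t => B a b * resolventOnes B t b) =O[𝓝[>] 0]
      fun t => classForcing B γ t ⟨a, ha⟩ := by
    refine IsBigO.of_norm_eventuallyLE ?_
    filter_upwards [self_mem_nhdsWithin] with t ht
    have hu := hB.resolventOnes_nonneg ht
    rw [Real.norm_of_nonneg (mul_nonneg (hB a b hab.1) (hu b))]
    exact (hB.mul_le_outflow hu ⟨a, ha⟩ hb).trans (le_add_of_nonneg_left zero_le_one)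
  have hforcing : (fun t => resolventOnes B t k) =O[𝓝[>] 0] fun t => ∑ j, classForcing B γ t j :=
    calc (fun t => resolventOnes B t k)
        =O[𝓝[>] 0] fun t => resolventOnes B t b := hB.resolventOnes_isBigO_of_reflTransGen hbk
      _ =O[𝓝[>] 0] fun t => classForcing B γ t ⟨a, ha⟩ :=
        (isBigO_const_mul_left_iff hab.2).1 hedge
      _ =O[𝓝[>] 0] fun t => ∑ j, classForcing B γ t j :=
        isBigO_sum_of_nonneg (hB.eventually_nonneg_classForcing γ) _
  exact ((isBigO_refl _ _).mul hforcing).trans (hγ.resolventOnes_isTheta hB hi).isBigO_symm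

theorem IsClassChain.inv_pow_isBigO_resolventOnes (hB : IsMetzler B) {l : List (Set (Fin N))}
    (hl : IsClassChain B (γ :: l)) (hi : i ∈ γ) :
    (fun t => t⁻¹ ^ chainLen B (γ :: l)) =O[𝓝[>] 0] fun t => resolventOnes B t i := by
  induction l generalizing γ i with
  | nil => exact (hl.1 γ List.mem_cons_self).inv_pow_isBigO_resolventOnes hB hi
  | cons δ l ih =>
    obtain ⟨hγ, ⟨⟨m, hm, n, hn, hmn⟩, hne⟩, hδl⟩ := isClassChain_cons_cons.1 hl
    have hnγ : n ∉ γ := fun h => hne (hγ.eq_of_mem (hδl.1 δ List.mem_cons_self) h hn)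
    rw [chainLen_cons]
    simp only [pow_add]
    exact ((isBigO_refl _ _).mul (ih hδl hn)).trans
      (hγ.inv_pow_mul_resolventOnes_isBigO hB hi hnγ ((hγ.access hi hm).trans hmn))

theorem IsMetzler.exists_isClassChain_resolventOnes_isBigO (hB : IsMetzler B) (i : Fin N) :
    ∃ l, IsClassChain B (classOf B i :: l) ∧
      (fun t => resolventOnes B t i) =O[𝓝[>] 0] fun t => t⁻¹ ^ chainLen B (classOf B i :: l) := by
  have hwf : WellFounded fun k i => access B i k ∧ ¬access B k i :=
    haveI : IsTrans (Fin N) fun k i => access B i k ∧ ¬access B k i :=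
      ⟨fun _ _ _ hab hbc => ⟨hbc.1.trans hab.1, fun h => hab.2 (h.trans hbc.1)⟩⟩
    haveI : Std.Irrefl fun k i => access B i k ∧ ¬access B k i := ⟨fun _ h => h.2 h.1⟩
    Finite.wellFounded_of_trans_of_irrefl _
  induction i using hwf.induction with
  | _ i ih =>
    obtain ⟨l, hl, hsucc⟩ := exists_isClassChain_cons_classOf
      (P := fun k n => (fun t => resolventOnes B t k) =O[𝓝[>] 0] fun t => t⁻¹ ^ n)
      (fun k m n hmn h => h.trans (inv_pow_isBigO_inv_pow_iff.2 hmn))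
      fun k hik hki => ih k ⟨hik, hki⟩
    have hγ := isClass_classOf B i
    have hi := mem_classOf_self B i
    refine ⟨l, hl, (hγ.resolventOnes_isTheta hB hi).isBigO.trans ?_⟩
    rw [chainLen_cons B _ l]
    simp only [pow_add]
    exact (isBigO_refl _ _).mul (hγ.sum_classForcing_isBigO hi hsucc)

theorem IsMetzler.resolventOnes_isBigO_inv_pow_iff_chainLen_le (hB : IsMetzler B) {n : ℕ} :
    (resolventOnes B =O[𝓝[>] 0] fun t => t⁻¹ ^ n) ↔ ∀ l, IsClassChain B l → chainLen B l ≤ n := by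
  constructor
  · rintro h (_ | ⟨γ, l⟩) hl
    · exact n.zero_le
    · obtain ⟨i, hi⟩ := (hl.1 γ List.mem_cons_self).nonempty
      exact inv_pow_isBigO_inv_pow_iff.1
        ((hl.inv_pow_isBigO_resolventOnes hB hi).trans (isBigO_pi.1 h i))
  · refine fun h => isBigO_pi.2 fun i => ?_
    obtain ⟨l, hl, hi⟩ := hB.exists_isClassChain_resolventOnes_isBigO i
    exact hi.trans (inv_pow_isBigO_inv_pow_iff.2 (h _ hl))

end Growth

/-- **Rothblum index theorem.**  For a Metzler matrix `B`, the spectral abscissa `ζ(B)`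
is an eigenvalue of `B` whose index (the smallest `d` with
`ker((B−ζ(B)I)^d) = ker((B−ζ(B)I)^{d+1})`) equals the length of the longest chain of
classes of `B`. -/
theorem rothblum_index_theorem (hN : 0 < N)
    (B : Matrix (Fin N) (Fin N) ℝ)
    (hMetzler : ∀ i j, i ≠ j → 0 ≤ B i j)
    (d : ℕ)
    (hker : LinearMap.ker (((B - specAbs B • 1) ^ d).mulVecLin)
      = LinearMap.ker (((B - specAbs B • 1) ^ (d + 1)).mulVecLin))
    (hmin : ∀ k < d, LinearMap.ker (((B - specAbs B • 1) ^ k).mulVecLin)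
      ≠ LinearMap.ker (((B - specAbs B • 1) ^ (k + 1)).mulVecLin)) :
    specAbs B ∈ spectrum ℝ B ∧
    IsGreatest {L : ℕ | ∃ l : List (Set (Fin N)), IsClassChain B l ∧ chainLen B l = L} d := by
  have : NeZero N := ⟨hN.ne'⟩
  have hB : IsMetzler B := hMetzler
  have hindex (k : ℕ) :
      LinearMap.ker ((B - specAbs B • 1) ^ (k + 1)).mulVecLin ≤
        LinearMap.ker ((B - specAbs B • 1) ^ k).mulVecLin ↔
      ∀ l, IsClassChain B l → chainLen B l ≤ k :=
    hB.resolventOnes_isBigO_inv_pow_iff.symm.trans hB.resolventOnes_isBigO_inv_pow_iff_chainLen_le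
  have hupper : ∀ l, IsClassChain B l → chainLen B l ≤ d := (hindex d).1 hker.ge
  refine ⟨hB.specAbs_mem_spectrum, ?_, fun _ ⟨l, hl, hlen⟩ => hlen ▸ hupper l hl⟩
  cases d with
  | zero => exact ⟨[], isClassChain_nil B, rfl⟩
  | succ k =>
    have hnot : ¬∀ l, IsClassChain B l → chainLen B l ≤ k := fun h =>
      hmin k k.lt_succ_self (le_antisymm (ker_mulVecLin_pow_le_pow_succ _ k) ((hindex k).2 h))
    push Not at hnot
    obtain ⟨l, hl, hlen⟩ := hnot
    exact ⟨l, hl, le_antisymm (hupper l hl) hlen⟩
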